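/- arXiv:2106.03753 — 2 statements merged into one kernel-verified Lean document; each statement's English description precedes it below -/
import Mathlib

section
/- Let L be a natural number and S a finite set of M ≥ 1 natural numbers all less than 2^L. Define T 1 = S and, for j = 1, …, M, let the season elimination process on T j end in a final set C L; then C L is a singleton {w j} with w j = max (T j), and set T (j+1) = T j \ {w j}. Then w 1 > w 2 > ⋯ > w M, the elements w 1, …, w M enumerate all of S, w M = min S, and the label map ℓ defined on S by ℓ(x) = |{y ∈ S : x ≤ y}| satisfies ℓ(w j) = j for every j and is a bijection from S onto {1, 2, …, M}. In particular, the iterated process assigns a unique label in {1, …, M} to each of the M elements. -/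
/-- One step of the season elimination process: at step `k` (bit position `L - 1 - k`,
most significant bit first), the candidates whose bit is `1` eliminate those whose bit
is `0`; if no candidate has bit `1`, the candidate set is unchanged. -/
def seasonStep (L k : ℕ) (C : Finset ℕ) : Finset ℕ :=
  let C' := C.filter fun x => Nat.testBit x (L - 1 - k) = true
  if C'.Nonempty then C' else C

/-- The season elimination process on a finite set `S` of `L`-bit identifiers:
`seasonProcess L S 0 = S` and `seasonProcess L S (k+1)` is obtained from
`seasonProcess L S k` by one elimination step on bit `L - 1 - k`. -/
def seasonProcess (L : ℕ) (S : Finset ℕ) : ℕ → Finset ℕ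
  | 0 => S
  | k + 1 => seasonStep L k (seasonProcess L S k)

/-!
The label of `x` is its rank in `S` counted from the top. The rank is a strictly decreasing
bijection of `S` onto `{1, …, M}`, so once season `j` starts from `T j = {x ∈ S | j ≤ ℓ x}` its
winner is the element of rank exactly `j`, and removing it leaves `{x ∈ S | j + 1 ≤ ℓ x}`. That a
season is won by the largest candidate holds because after `k` steps the survivors are those whose
`k`-bit prefix `x / 2 ^ (L - k)` is largest.
-/

open Finset

section Season

variable {α : Type*}

/-- The set of maximum points of `g` on `S`. Season survivors are described in this form rather than
through the maximum of `S`, so that the empty set needs no separate treatment. -/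
def maximizers (S : Finset α) (g : α → ℕ) : Finset α :=
  {x ∈ S | ∀ y ∈ S, g y ≤ g x}

theorem mem_maximizers {S : Finset α} {g : α → ℕ} {x : α} :
    x ∈ maximizers S g ↔ x ∈ S ∧ ∀ y ∈ S, g y ≤ g x :=
  mem_filter

theorem maximizers_eq_filter_odd {S : Finset α} {g : α → ℕ}
    (hodd : {x ∈ maximizers S (g · / 2) | g x % 2 = 1}.Nonempty) :
    maximizers S g = {x ∈ maximizers S (g · / 2) | g x % 2 = 1} := by
  obtain ⟨z, hz⟩ := hodd
  simp only [mem_filter, mem_maximizers] at hz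
  obtain ⟨⟨hzS, hzmax⟩, hzodd⟩ := hz
  ext x
  simp only [mem_filter, mem_maximizers]
  constructor
  · rintro ⟨hx, hmax⟩
    have hzx := hmax z hzS
    have hxz := hzmax x hx
    exact ⟨⟨hx, fun y hy => Nat.div_le_div_right (hmax y hy)⟩, by lia⟩
  · rintro ⟨⟨hx, hmax⟩, hxodd⟩
    refine ⟨hx, fun y hy => ?_⟩
    have hyx := hmax y hy
    lia

theorem maximizers_eq_maximizers_half {S : Finset α} {g : α → ℕ}
    (heven : ∀ x ∈ maximizers S (g · / 2), g x % 2 = 0) :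
    maximizers S g = maximizers S (g · / 2) := by
  ext x
  simp only [mem_maximizers] at heven ⊢
  refine ⟨fun ⟨hx, hmax⟩ => ⟨hx, fun y hy => Nat.div_le_div_right (hmax y hy)⟩, ?_⟩
  rintro ⟨hx, hmax⟩
  refine ⟨hx, fun y hy => ?_⟩
  have hyx := hmax y hy
  rcases hyx.lt_or_eq with hlt | heq
  · lia
  · have hyeven := heven y ⟨hy, fun z hz => (hmax z hz).trans_eq heq.symm⟩
    lia

theorem seasonStep_maximizers {L k : ℕ} (hk : k < L) (S : Finset ℕ) :
    seasonStep L k (maximizers S (· / 2 ^ (L - k))) = maximizers S (· / 2 ^ (L - (k + 1))) := by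
  have hbit : L - 1 - k = L - (k + 1) := by lia
  have hhalf (x : ℕ) : x / 2 ^ (L - k) = x / 2 ^ (L - (k + 1)) / 2 := by
    rw [Nat.div_div_eq_div_mul, ← pow_succ, show L - (k + 1) + 1 = L - k by lia]
  simp only [seasonStep, Nat.testBit_eq_decide_div_mod_eq, decide_eq_true_eq, hbit, hhalf]
  split_ifs with hodd
  · exact (maximizers_eq_filter_odd hodd).symm
  · refine (maximizers_eq_maximizers_half fun x hx => ?_).symm
    rw [not_nonempty_iff_eq_empty, filter_eq_empty_iff] at hodd
    exact Nat.mod_two_ne_one.mp (hodd hx)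

theorem seasonProcess_eq_maximizers {L k : ℕ} {S : Finset ℕ} (hlt : ∀ x ∈ S, x < 2 ^ L)
    (hk : k ≤ L) : seasonProcess L S k = maximizers S (· / 2 ^ (L - k)) := by
  induction k with
  | zero =>
    refine (filter_true_of_mem fun x _ y hy => ?_).symm
    simp [Nat.div_eq_of_lt (hlt y hy)]
  | succ k ih => rw [seasonProcess, ih (by lia), seasonStep_maximizers hk]

theorem seasonProcess_eq_singleton_iff {L m : ℕ} {S : Finset ℕ} (hlt : ∀ x ∈ S, x < 2 ^ L) :
    seasonProcess L S L = {m} ↔ IsGreatest (S : Set ℕ) m := by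
  have hmem (x : ℕ) : x ∈ seasonProcess L S L ↔ IsGreatest (S : Set ℕ) x := by
    simp [seasonProcess_eq_maximizers hlt le_rfl, mem_maximizers, IsGreatest, upperBounds]
  rw [Finset.eq_singleton_iff_unique_mem]
  simp only [hmem]
  exact ⟨And.left, fun h => ⟨h, fun _ hx => hx.unique h⟩⟩

end Season

section Rank

variable {α : Type*} [LinearOrder α] {S : Finset α} {x : α}

/-- The rank of `x` in `S` counted from the top, the maximum having rank `1`. This is the label
`ℓ x` of the naming algorithm. -/
def descRank (S : Finset α) (x : α) : ℕ :=
  #{y ∈ S | x ≤ y}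

theorem one_le_descRank (hx : x ∈ S) : 1 ≤ descRank S x :=
  card_pos.mpr ⟨x, mem_filter.mpr ⟨hx, le_rfl⟩⟩

theorem descRank_le_card (S : Finset α) (x : α) : descRank S x ≤ #S :=
  card_filter_le S _

theorem strictAntiOn_descRank (S : Finset α) : StrictAntiOn (descRank S) S := by
  intro x hx y _ hxy
  refine card_lt_card (ssubset_iff_of_subset ?_ |>.mpr ⟨x, ?_, ?_⟩)
  · exact monotone_filter_right S fun _ _ hy => hxy.le.trans hy
  · exact mem_filter.mpr ⟨hx, le_rfl⟩
  · exact fun h => hxy.not_ge (mem_filter.mp h).2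

theorem bijOn_descRank (S : Finset α) : Set.BijOn (descRank S) S (Set.Icc 1 #S) := by
  have hmaps : Set.MapsTo (descRank S) S (Icc 1 #S : Finset ℕ) := fun x hx =>
    mem_coe.mpr (mem_Icc.mpr ⟨one_le_descRank hx, descRank_le_card S x⟩)
  have hinj := (strictAntiOn_descRank S).injOn
  rw [← coe_Icc]
  exact ⟨hmaps, hinj, surjOn_of_injOn_of_card_le _ hmaps hinj (by simp)⟩

theorem descRank_eq_of_isGreatest {j : ℕ} (hj : j ∈ Set.Icc 1 #S)
    (hx : IsGreatest {y | y ∈ S ∧ j ≤ descRank S y} x) : descRank S x = j := by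
  obtain ⟨y, hy, rfl⟩ := (bijOn_descRank S).surjOn hj
  have hyx : y ≤ x := hx.2 ⟨hy, le_rfl⟩
  exact ((strictAntiOn_descRank S).antitoneOn hy hx.1.1 hyx).antisymm hx.1.2

end Rank

/-- `T` and `w` record the removal of the elements of `S` one at a time, always the largest one:
`T j` is what remains before removal `j`, and `w j` is the element then removed. Removals are
numbered `1, …, #S`; nothing is required of the other values of `T` and `w`. -/
structure IsMaxRemoval {α : Type*} [LinearOrder α] (S : Finset α) (T : ℕ → Finset α)
    (w : ℕ → α) : Prop where
  start : T 1 = S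
  isGreatest : ∀ j, 1 ≤ j → j ≤ #S → IsGreatest (T j : Set α) (w j)
  step : ∀ j, 1 ≤ j → j < #S → T (j + 1) = T j \ {w j}

namespace IsMaxRemoval

variable {α : Type*} [LinearOrder α] {S : Finset α} {T : ℕ → Finset α} {w : ℕ → α} {j : ℕ}

theorem eq_filter_le_descRank (h : IsMaxRemoval S T w) (hj1 : 1 ≤ j) (hj : j ≤ #S) :
    T j = {x ∈ S | j ≤ descRank S x} := by
  induction j, hj1 using Nat.le_induction with
  | base => rw [h.start, filter_true_of_mem fun x hx => one_le_descRank hx]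
  | succ j hj1 ih =>
    have hT := ih (by lia)
    have hw := h.isGreatest j hj1 (by lia)
    rw [hT, coe_filter] at hw
    have hrank : descRank S (w j) = j := descRank_eq_of_isGreatest ⟨hj1, by lia⟩ hw
    have hne {x : α} (hx : x ∈ S) : x ≠ w j ↔ descRank S x ≠ j := by
      rw [← (strictAntiOn_descRank S).injOn.ne_iff hx hw.1.1, hrank]
    ext x
    rw [h.step j hj1 (by lia), hT]
    simp only [mem_sdiff, mem_filter, mem_singleton, and_assoc, and_congr_right_iff]
    intro hx
    rw [← ne_eq, hne hx]
    lia

theorem mem (h : IsMaxRemoval S T w) (hj1 : 1 ≤ j) (hj : j ≤ #S) : w j ∈ S := by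
  have hw : w j ∈ T j := (h.isGreatest j hj1 hj).1
  rw [h.eq_filter_le_descRank hj1 hj] at hw
  exact (mem_filter.mp hw).1

theorem descRank_eq (h : IsMaxRemoval S T w) (hj1 : 1 ≤ j) (hj : j ≤ #S) :
    descRank S (w j) = j := by
  have hw := h.isGreatest j hj1 hj
  rw [h.eq_filter_le_descRank hj1 hj, coe_filter] at hw
  exact descRank_eq_of_isGreatest ⟨hj1, hj⟩ hw

theorem strictAntiOn (h : IsMaxRemoval S T w) : StrictAntiOn w (Set.Icc 1 #S) := by
  rintro i ⟨hi1, hi⟩ j ⟨hj1, hj⟩ hij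
  rwa [← (strictAntiOn_descRank S).lt_iff_gt (h.mem hi1 hi) (h.mem hj1 hj),
    h.descRank_eq hi1 hi, h.descRank_eq hj1 hj]

theorem apply_descRank (h : IsMaxRemoval S T w) {x : α} (hx : x ∈ S) : w (descRank S x) = x :=
  have hone := one_le_descRank hx
  have hle := descRank_le_card S x
  (strictAntiOn_descRank S).injOn (h.mem hone hle) hx (h.descRank_eq hone hle)

theorem isLeast_apply_card (h : IsMaxRemoval S T w) (hS : S.Nonempty) :
    IsLeast (S : Set α) (w #S) := by
  have hpos : 1 ≤ #S := hS.card_pos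
  refine ⟨h.mem hpos le_rfl, fun x hx => ?_⟩
  rw [← (strictAntiOn_descRank S).le_iff_ge hx (h.mem hpos le_rfl), h.descRank_eq hpos le_rfl]
  exact descRank_le_card S x

end IsMaxRemoval

theorem isMaxRemoval_of_seasonProcess {L : ℕ} {S : Finset ℕ} {T : ℕ → Finset ℕ} {w : ℕ → ℕ}
    (hlt : ∀ x ∈ S, x < 2 ^ L) (hT1 : T 1 = S)
    (hfinal : ∀ j, 1 ≤ j → j ≤ #S → seasonProcess L (T j) L = {w j})
    (hTstep : ∀ j, 1 ≤ j → j < #S → T (j + 1) = T j \ {w j}) : IsMaxRemoval S T w := by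
  have hsub {j : ℕ} (hj1 : 1 ≤ j) (hj : j ≤ #S) : T j ⊆ S := by
    induction j, hj1 using Nat.le_induction with
    | base => exact hT1.subset
    | succ j hj1 ih =>
      rw [hTstep j hj1 (by lia)]
      exact sdiff_subset.trans (ih (by lia))
  refine ⟨hT1, fun j hj1 hj => ?_, hTstep⟩
  exact (seasonProcess_eq_singleton_iff fun x hx => hlt x (hsub hj1 hj hx)).mp (hfinal j hj1 hj)

/-- The combinatorial core of the deterministic naming algorithm DETNAML: iterating the
season elimination process on a set `S` of `M ≥ 1` identifiers below `2^L`, where in each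
season `j` the final candidate set is the singleton `{w j}` and `w j` then stops
participating (`T (j+1) = T j \ {w j}`, starting from `T 1 = S`), we have:
each `w j` is the maximum of `T j`; the `w j` are strictly decreasing; they enumerate all
of `S`; `w M` is the minimum of `S`; and the label map `ℓ(x) = |{y ∈ S : x ≤ y}|`
satisfies `ℓ(w j) = j` and is a bijection from `S` onto `{1, …, M}`. -/
theorem detnaml_labels (L M : ℕ) (hM : 1 ≤ M) (S : Finset ℕ) (hcard : S.card = M)
    (hlt : ∀ x ∈ S, x < 2 ^ L)
    (T : ℕ → Finset ℕ) (w : ℕ → ℕ)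
    (hT1 : T 1 = S)
    (hfinal : ∀ j, 1 ≤ j → j ≤ M → seasonProcess L (T j) L = {w j})
    (hTstep : ∀ j, 1 ≤ j → j ≤ M → T (j + 1) = T j \ {w j}) :
    (∀ j, 1 ≤ j → j ≤ M → ∃ h : (T j).Nonempty, w j = (T j).max' h) ∧
    (∀ j, 1 ≤ j → j < M → w (j + 1) < w j) ∧
    (∀ x ∈ S, ∃ j, 1 ≤ j ∧ j ≤ M ∧ w j = x) ∧
    (∃ hS : S.Nonempty, w M = S.min' hS) ∧
    (∀ j, 1 ≤ j → j ≤ M → (S.filter fun y => w j ≤ y).card = j) ∧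
    Set.BijOn (fun x => (S.filter fun y => x ≤ y).card) ↑S (Set.Icc 1 M) := by
  subst hcard
  have h : IsMaxRemoval S T w := isMaxRemoval_of_seasonProcess hlt hT1 hfinal
    fun j hj1 hj => hTstep j hj1 hj.le
  have hS : S.Nonempty := card_pos.mp hM
  refine ⟨fun j hj1 hj => ?_, fun j hj1 hj => ?_, fun x hx => ?_, ⟨hS, ?_⟩,
    fun j hj1 hj => h.descRank_eq hj1 hj, bijOn_descRank S⟩
  · have hw := h.isGreatest j hj1 hj
    exact ⟨⟨w j, hw.1⟩, hw.unique ((T j).isGreatest_max' _)⟩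
  · exact h.strictAntiOn ⟨hj1, hj.le⟩ ⟨by lia, hj⟩ j.lt_succ_self
  · exact ⟨descRank S x, one_le_descRank hx, descRank_le_card S x, h.apply_descRank hx⟩
  · exact (h.isLeast_apply_card hS).unique (S.isLeast_min' hS)
end

section
/- There exists a natural number n₀ such that for every n ≥ n₀ the following holds. Let m = ⌈n / log₂ n⌉ and let n stations independently and uniformly at random each choose one of m groups. Then with probability at least 1 − 1/n, every group has load at most 4·log₂ n. -/
open MeasureTheory

/-- The uniform probability measure on `Fin m` (for `m ≥ 1`): counting measure
normalized by the cardinality `m`. -/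
noncomputable def uniformFin (m : ℕ) : Measure (Fin m) :=
  (m : ENNReal)⁻¹ • Measure.count

/-- The distribution of `n` stations each independently and uniformly choosing one of
`m` groups: the product of `n` copies of the uniform measure on `Fin m`. -/
noncomputable def uniformChoices (n m : ℕ) : Measure (Fin n → Fin m) :=
  Measure.pi fun _ => uniformFin m

/-- The load of group `b` under the outcome `X`: the number of stations choosing `b`. -/
def load {n m : ℕ} (X : Fin n → Fin m) (b : Fin m) : ℕ :=
  (Finset.univ.filter fun i => X i = b).card

/-!
The load of a fixed group is binomial with parameters `n` and `1 / m`, so its moment generating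
function at `t` is `(1 + (exp t - 1) / m) ^ n ≤ exp ((exp t - 1) * (n / m))`. Since `n / m ≤ log₂ n`
and `exp 1 < 3`, Chernoff's bound with `t = 1` gives a load above `4 * log₂ n` probability at most
`exp (-2 * log₂ n) ≤ 1 / n ^ 2`, and there are at most `n` groups.
-/

open ProbabilityTheory Real

section Chernoff

variable {n m : ℕ}

instance isProbabilityMeasure_uniformFin [NeZero m] : IsProbabilityMeasure (uniformFin m) :=
  ⟨by simp [uniformFin, ENNReal.inv_mul_cancel (NeZero.ne _) (ENNReal.natCast_ne_top m)]⟩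

instance isProbabilityMeasure_uniformChoices [NeZero m] :
    IsProbabilityMeasure (uniformChoices n m) :=
  inferInstanceAs (IsProbabilityMeasure (Measure.pi fun _ => uniformFin m))

theorem integral_uniformFin {E : Type*} [NormedAddCommGroup E] [NormedSpace ℝ E]
    [CompleteSpace E] (f : Fin m → E) : ∫ x, f x ∂uniformFin m = (m : ℝ)⁻¹ • ∑ x, f x := by
  simp [uniformFin, integral_count]

theorem cast_load_eq_sum (X : Fin n → Fin m) (b : Fin m) :
    (load X b : ℝ) = ∑ i, if X i = b then 1 else 0 := by
  simp [load]

theorem mgf_uniformFin_indicator (b : Fin m) (t : ℝ) :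
    mgf (fun x => if x = b then 1 else 0) (uniformFin m) t = 1 + (exp t - 1) / m := by
  have hm : (m : ℝ) ≠ 0 := by exact_mod_cast b.pos.ne'
  have hexp (x : Fin m) :
      exp (t * if x = b then 1 else 0) = 1 + if x = b then exp t - 1 else 0 := by
    split_ifs <;> simp
  simp only [mgf, hexp, integral_uniformFin, Finset.sum_add_distrib, Finset.sum_const,
    Finset.card_univ, Fintype.card_fin, nsmul_eq_mul, mul_one, Finset.sum_ite_eq',
    Finset.mem_univ, if_true, smul_eq_mul]
  field_simp

theorem mgf_load (b : Fin m) (t : ℝ) :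
    mgf (fun X => (load X b : ℝ)) (uniformChoices n m) t = (1 + (exp t - 1) / m) ^ n := by
  have : NeZero m := .of_pos b.pos
  calc mgf (fun X => (load X b : ℝ)) (uniformChoices n m) t
      = ∫ X, ∏ i, exp (t * if X i = b then 1 else 0) ∂uniformChoices n m := by
        simp only [mgf, cast_load_eq_sum, Finset.mul_sum, exp_sum]
    _ = mgf (fun x => if x = b then 1 else 0) (uniformFin m) t ^ n := by
        rw [uniformChoices,
          integral_fintype_prod_eq_pow fun x => exp (t * if x = b then 1 else 0),
          Fintype.card_fin, mgf]
    _ = (1 + (exp t - 1) / m) ^ n := by rw [mgf_uniformFin_indicator]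

theorem mgf_load_le (b : Fin m) (t : ℝ) :
    mgf (fun X => (load X b : ℝ)) (uniformChoices n m) t ≤ exp ((exp t - 1) * (n / m)) := by
  have hbase : 0 ≤ 1 + (exp t - 1) / m := by
    rw [← mgf_uniformFin_indicator b]
    exact mgf_nonneg
  calc mgf (fun X => (load X b : ℝ)) (uniformChoices n m) t
      = (1 + (exp t - 1) / m) ^ n := mgf_load b t
    _ ≤ exp ((exp t - 1) / m) ^ n := by
        gcongr
        rw [add_comm]
        exact add_one_le_exp _
    _ = exp ((exp t - 1) * (n / m)) := by
        rw [← exp_nat_mul]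
        ring_nf

theorem measureReal_le_load_le (b : Fin m) (r : ℝ) {t : ℝ} (ht : 0 ≤ t) :
    (uniformChoices n m).real {X | r ≤ load X b} ≤ exp ((exp t - 1) * (n / m) - t * r) := by
  have : NeZero m := .of_pos b.pos
  calc (uniformChoices n m).real {X | r ≤ load X b}
      ≤ exp (-t * r) * mgf (fun X => (load X b : ℝ)) (uniformChoices n m) t :=
        measure_ge_le_exp_mul_mgf r ht .of_finite
    _ ≤ exp (-t * r) * exp ((exp t - 1) * (n / m)) := by
        gcongr
        exact mgf_load_le b t
    _ = exp ((exp t - 1) * (n / m) - t * r) := by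
        rw [← exp_add]
        ring_nf

theorem measureReal_exists_le_load_le (r : ℝ) {t : ℝ} (ht : 0 ≤ t) :
    (uniformChoices n m).real {X | ∃ b, r ≤ load X b} ≤
      m * exp ((exp t - 1) * (n / m) - t * r) := by
  calc (uniformChoices n m).real {X | ∃ b, r ≤ load X b}
      ≤ ∑ b, (uniformChoices n m).real {X | r ≤ load X b} := by
        rw [Set.ofPred_exists]
        exact measureReal_iUnion_fintype_le _
    _ ≤ ∑ _b : Fin m, exp ((exp t - 1) * (n / m) - t * r) := by
        gcongr with b
        exact measureReal_le_load_le b r ht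
    _ = m * exp ((exp t - 1) * (n / m) - t * r) := by simp

end Chernoff

theorem log_le_logb_two {x : ℝ} (hx : 1 ≤ x) : log x ≤ logb 2 x :=
  le_div_self (log_nonneg hx) (log_pos one_lt_two) (log_two_lt_d9.le.trans (by norm_num))

theorem exp_neg_two_mul_logb_two_le {x : ℝ} (hx : 1 ≤ x) : exp (-2 * logb 2 x) ≤ 1 / x ^ 2 := by
  have hx₀ : 0 < x := by linarith
  calc exp (-2 * logb 2 x)
      ≤ exp (-(2 * log x)) := by
        gcongr
        linarith [log_le_logb_two hx]
    _ = 1 / x ^ 2 := by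
        rw [exp_neg, one_div, two_mul, exp_add, exp_log hx₀, sq]

theorem measureReal_exists_four_mul_logb_le_load_le {n m : ℕ} (hn : 2 ≤ n)
    (hm : n / logb 2 n ≤ m) :
    (uniformChoices n m).real {X | ∃ b, 4 * logb 2 n ≤ load X b} ≤ m / (n : ℝ) ^ 2 := by
  have hn₁ : 1 < (n : ℝ) := by exact_mod_cast hn
  have hL : 0 < logb 2 n := logb_pos one_lt_two hn₁
  have hload : n / m ≤ logb 2 n := div_le_of_le_mul₀ m.cast_nonneg hL.le <| by
    rwa [mul_comm, ← div_le_iff₀ hL]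
  have hexponent : (exp 1 - 1) * (n / m) - 1 * (4 * logb 2 n) ≤ -2 * logb 2 n := by
    have he : exp 1 - 1 ≤ 2 := by linarith [exp_one_lt_three]
    have : (exp 1 - 1) * (n / m) ≤ 2 * logb 2 n := by gcongr
    linarith
  calc (uniformChoices n m).real {X | ∃ b, 4 * logb 2 n ≤ load X b}
      ≤ m * exp ((exp 1 - 1) * (n / m) - 1 * (4 * logb 2 n)) :=
        measureReal_exists_le_load_le _ zero_le_one
    _ ≤ m * (1 / (n : ℝ) ^ 2) := by
        gcongr
        exact (exp_le_exp.2 hexponent).trans (exp_neg_two_mul_logb_two_le hn₁.le)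
    _ = m / (n : ℝ) ^ 2 := mul_one_div _ _

theorem ofReal_one_sub_le_measure {Ω : Type*} [MeasurableSpace Ω] {μ : Measure Ω}
    [IsProbabilityMeasure μ] {s : Set Ω} {p : ℝ} (hp : μ.real sᶜ ≤ p) :
    ENNReal.ofReal (1 - p) ≤ μ s := by
  have hcover : 1 ≤ μ.real s + μ.real sᶜ := by
    simpa using measureReal_union_le (μ := μ) s sᶜ
  rw [← ofReal_measureReal]
  exact ENNReal.ofReal_le_ofReal (by linarith)

theorem groups_load_upper_whp_general {n m : ℕ} (hn : 2 ≤ n)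
    (hm : n / logb 2 n ≤ m) (hmn : m ≤ n) :
    ENNReal.ofReal (1 - 1 / (n : ℝ)) ≤
      uniformChoices n m {X | ∀ b, (load X b : ℝ) ≤ 4 * logb 2 n} := by
  have hn₁ : 1 < (n : ℝ) := by exact_mod_cast hn
  have hL : 0 < logb 2 n := logb_pos one_lt_two hn₁
  have : NeZero m := .of_pos (by exact_mod_cast (by positivity : 0 < n / logb 2 n).trans_le hm)
  apply ofReal_one_sub_le_measure
  calc (uniformChoices n m).real {X | ∀ b, (load X b : ℝ) ≤ 4 * logb 2 n}ᶜ
      ≤ (uniformChoices n m).real {X | ∃ b, 4 * logb 2 n ≤ load X b} := by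
        refine measureReal_mono fun X hX => ?_
        obtain ⟨b, hb⟩ := not_forall.1 hX
        exact ⟨b, (not_le.1 hb).le⟩
    _ ≤ m / (n : ℝ) ^ 2 := measureReal_exists_four_mul_logb_le_load_le hn hm
    _ ≤ n / (n : ℝ) ^ 2 := by gcongr
    _ = 1 / n := by field_simp

theorem natCeil_div_logb_two_le {n : ℕ} (hn : 2 ≤ n) : ⌈(n : ℝ) / logb 2 n⌉₊ ≤ n := by
  have hL : 1 ≤ logb 2 n := by
    rw [le_logb_iff_rpow_le one_lt_two (by positivity), rpow_one]
    exact_mod_cast hn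
  exact Nat.ceil_le.2 (div_le_self n.cast_nonneg hL)

/-- When `n` stations independently and uniformly at random each choose one of
`m = ⌈n / log₂ n⌉` groups, with probability at least `1 - 1/n` every group has
load at most `4·log₂ n`. -/
theorem groups_load_upper_whp :
    ∃ n₀ : ℕ, ∀ n : ℕ, n₀ ≤ n →
      ENNReal.ofReal (1 - 1 / (n : ℝ)) ≤
        uniformChoices n ⌈(n : ℝ) / Real.logb 2 n⌉₊
          {X | ∀ b, (load X b : ℝ) ≤ 4 * Real.logb 2 n} :=
  ⟨2, fun _ hn => groups_load_upper_whp_general hn (Nat.le_ceil _) (natCeil_div_logb_two_le hn)⟩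
end
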